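/- arXiv:1702.01192 — 2 statements merged into one kernel-verified Lean document; each statement's English description precedes it below -/
import Mathlib

section
/- Let r>0, let m≥1 be an integer with c_m = -(π/r)^2·((2m-1)/4)^2, and let α_0>0, β_0>0, γ_0>0 be such that β_0 = -c_m·α_0 - c_m^2 while β_0 ≠ -c_k·α_0 - c_k^2 for every integer k≥1 with k ≠ m (simple point). Then for every ε>0 there exist a positive real β with |β-β_0| < ε and a four times continuously differentiable function x on [-r,r], not identically zero, satisfying the boundary conditions x'(-r) = x'''(-r) = 0, x(r) = x''(r) = 0, the nonlinear equation x'''' + α_0·x'' + β·x - γ_0·x^3 - 3·(x'')^3 - 12·x'·x''·x''' - 3·(x')^2·(x'''' - (α_0/2)·x'') = 0 on [-r,r], and sup_{s∈[-r,r]}|x^{(k)}(s)| < ε for k = 0,1,2,3,4. (Bifurcation with respect to the foundation parameter β alone, with α and γ fixed.) -/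
open Real Set

namespace Rod

open Filter Topology

abbrev X (r : ℝ) := C(Icc (-r) r, ℝ)

noncomputable def ext {r : ℝ} (h : -r ≤ r) (f : X r) : ℝ → ℝ := IccExtend h f

lemma ext_cont {r : ℝ} (h : -r ≤ r) (f : X r) : Continuous (ext h f) :=
  f.continuous.Icc_extend'

lemma ext_apply {r : ℝ} (h : -r ≤ r) (f : X r) (s : Icc (-r) r) : ext h f s = f s :=
  IccExtend_val h f s

lemma ext_of_mem {r : ℝ} (h : -r ≤ r) (f : X r) {s : ℝ} (hs : s ∈ Icc (-r) r) :
    ext h f s = f ⟨s, hs⟩ := IccExtend_of_mem h f hs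

lemma ext_norm {r : ℝ} (h : -r ≤ r) (f : X r) (s : ℝ) : ‖ext h f s‖ ≤ ‖f‖ :=
  f.norm_coe_le_norm _

lemma hasDerivAt_int {g : ℝ → ℝ} (hg : Continuous g) (a s : ℝ) :
    HasDerivAt (fun s => ∫ t in a..s, g t) (g s) s :=
  intervalIntegral.integral_hasDerivAt_right (hg.intervalIntegrable _ _)
    (hg.stronglyMeasurableAtFilter _ _) hg.continuousAt

lemma cont_int {g : ℝ → ℝ} (hg : Continuous g) (a : ℝ) :
    Continuous (fun s => ∫ t in a..s, g t) :=
  continuous_iff_continuousAt.2 fun s => (hasDerivAt_int hg a s).continuousAt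

/-- Integration from the left end point. -/
noncomputable def D {r : ℝ} (h : -r ≤ r) : X r →L[ℝ] X r :=
  LinearMap.mkContinuous
    { toFun := fun f => ⟨fun s => ∫ t in (-r)..(s : ℝ), ext h f t,
        (cont_int (ext_cont h f) _).comp continuous_subtype_val⟩
      map_add' := by
        intro f g
        ext s
        simp only [ContinuousMap.coe_mk, ContinuousMap.add_apply]
        rw [← intervalIntegral.integral_add ((ext_cont h f).intervalIntegrable _ _)
          ((ext_cont h g).intervalIntegrable _ _)]
        rfl
      map_smul' := by
        intro a f
        ext s
        simp only [ContinuousMap.coe_mk, ContinuousMap.smul_apply, RingHom.id_apply, smul_eq_mul]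
        rw [← intervalIntegral.integral_const_mul]
        rfl } (2 * r) (by
      intro f
      have hr : 0 ≤ r := by linarith
      rw [ContinuousMap.norm_le _ (by positivity)]
      intro s
      have := intervalIntegral.norm_integral_le_of_norm_le_const
        (a := -r) (b := (s : ℝ)) (f := ext h f) (C := ‖f‖) (fun t _ => ext_norm h f t)
      refine this.trans ?_
      rw [mul_comm]
      gcongr
      have h1 := s.2.1
      have h2 := s.2.2
      rw [abs_le]; constructor <;> linarith)

lemma D_apply {r : ℝ} (h : -r ≤ r) (f : X r) (s : Icc (-r) r) :
    D h f s = ∫ t in (-r)..(s : ℝ), ext h f t := rfl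

noncomputable def E {r : ℝ} (h : -r ≤ r) : X r →L[ℝ] X r :=
  D h - (ContinuousLinearMap.toSpanSingleton ℝ (1 : X r)).comp
    ((ContinuousMap.evalCLM ℝ (⟨r, h, le_rfl⟩ : Icc (-r) r)).comp (D h))

lemma E_apply {r : ℝ} (h : -r ≤ r) (f : X r) (s : Icc (-r) r) :
    E h f s = ∫ t in r..(s : ℝ), ext h f t := by
  have : E h f s = D h f s - D h f ⟨r, h, le_rfl⟩ := by
    simp [E]
  rw [this, D_apply, D_apply]
  rw [intervalIntegral.integral_interval_sub_left ((ext_cont h f).intervalIntegrable _ _)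
    ((ext_cont h f).intervalIntegrable _ _)]

lemma D_eq {r : ℝ} (h : -r ≤ r) (y v : ℝ → ℝ) (hv : Continuous v)
    (hy : ∀ s, HasDerivAt y (v s) s) (hy0 : y (-r) = 0) (f : X r)
    (hf : ∀ s : Icc (-r) r, f s = v s) (s : Icc (-r) r) : D h f s = y s := by
  rw [D_apply]
  have h1 : ∫ t in (-r)..(s : ℝ), ext h f t = ∫ t in (-r)..(s : ℝ), v t := by
    apply intervalIntegral.integral_congr
    intro t ht
    rw [uIcc_of_le s.2.1] at ht
    have ht' : t ∈ Icc (-r) r := ⟨ht.1, ht.2.trans s.2.2⟩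
    simp only [ext_of_mem h f ht', hf]
  rw [h1, intervalIntegral.integral_eq_sub_of_hasDerivAt (fun t _ => hy t)
    (hv.intervalIntegrable _ _), hy0, sub_zero]

lemma E_eq {r : ℝ} (h : -r ≤ r) (y v : ℝ → ℝ) (hv : Continuous v)
    (hy : ∀ s, HasDerivAt y (v s) s) (hy0 : y r = 0) (f : X r)
    (hf : ∀ s : Icc (-r) r, f s = v s) (s : Icc (-r) r) : E h f s = y s := by
  rw [E_apply]
  have h1 : ∫ t in r..(s : ℝ), ext h f t = ∫ t in r..(s : ℝ), v t := by
    apply intervalIntegral.integral_congr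
    intro t ht
    rw [uIcc_of_ge s.2.2] at ht
    have ht' : t ∈ Icc (-r) r := ⟨s.2.1.trans ht.1, ht.2⟩
    simp only [ext_of_mem h f ht', hf]
  rw [h1, intervalIntegral.integral_eq_sub_of_hasDerivAt (fun t _ => hy t)
    (hv.intervalIntegrable _ _), hy0, sub_zero]

noncomputable def G {r : ℝ} (h : -r ≤ r) : X r →L[ℝ] X r := (E h).comp (D h)

lemma G_eq {r : ℝ} (h : -r ≤ r) (y y1 v : ℝ → ℝ) (hv : Continuous v)
    (hy : ∀ s, HasDerivAt y (y1 s) s) (hy1 : ∀ s, HasDerivAt y1 (v s) s)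
    (h1 : y1 (-r) = 0) (h0 : y r = 0) (f : X r)
    (hf : ∀ s : Icc (-r) r, f s = v s) (s : Icc (-r) r) : G h f s = y s :=
  E_eq h y y1 (continuous_iff_continuousAt.2 fun s => (hy1 s).continuousAt) hy h0 _
    (D_eq h y1 v hv hy1 h1 f hf) s

noncomputable def ph (r ω : ℝ) : X r := ⟨fun s => cos (ω * (s + r)), by fun_prop⟩

lemma ph_apply (r ω : ℝ) (s : Icc (-r) r) : ph r ω s = cos (ω * (s + r)) := rfl

lemma exists_Y (r ω : ℝ) (hω : 0 < ω) (g : ℝ → ℝ) (hg : Continuous g) :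
    ∃ Y Y1 : ℝ → ℝ, (∀ s, HasDerivAt Y (Y1 s) s) ∧
      (∀ s, HasDerivAt Y1 (g s - ω ^ 2 * Y s) s) ∧ Y1 (-r) = 0 := by
  have hC : Continuous fun t => cos (ω * t) * g t := by fun_prop
  have hS : Continuous fun t => sin (ω * t) * g t := by fun_prop
  have dC := fun s => hasDerivAt_int hC (-r) s
  have dS := fun s => hasDerivAt_int hS (-r) s
  have hl : ∀ s, HasDerivAt (fun s => ω * s) ω s := fun s => by
    simpa using (hasDerivAt_id s).const_mul ω
  have ds : ∀ s, HasDerivAt (fun s => sin (ω * s)) (cos (ω * s) * ω) s := fun s => (hl s).sin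
  have dc : ∀ s, HasDerivAt (fun s => cos (ω * s)) (-sin (ω * s) * ω) s := fun s => (hl s).cos
  refine ⟨fun s => (sin (ω * s) * (∫ t in (-r)..s, cos (ω * t) * g t)
      - cos (ω * s) * (∫ t in (-r)..s, sin (ω * t) * g t)) / ω,
    fun s => cos (ω * s) * (∫ t in (-r)..s, cos (ω * t) * g t)
      + sin (ω * s) * (∫ t in (-r)..s, sin (ω * t) * g t), ?_, ?_, ?_⟩
  · intro s
    refine ((((ds s).mul (dC s)).sub ((dc s).mul (dS s))).div_const ω).congr_deriv ?_
    field_simp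
    ring
  · intro s
    refine (((dc s).mul (dC s)).add ((ds s).mul (dS s))).congr_deriv ?_
    have := sin_sq_add_cos_sq (ω * s)
    field_simp
    linear_combination (g s) * this
  · simp

lemma d_cos (r ω s : ℝ) :
    HasDerivAt (fun s => cos (ω * (s + r))) (-ω * sin (ω * (s + r))) s := by
  have hl : HasDerivAt (fun s => ω * (s + r)) ω s := by
    simpa using ((hasDerivAt_id s).add_const r).const_mul ω
  exact hl.cos.congr_deriv (by ring)

lemma d_sin (r ω s : ℝ) :
    HasDerivAt (fun s => sin (ω * (s + r))) (ω * cos (ω * (s + r))) s := by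
  have hl : HasDerivAt (fun s => ω * (s + r)) ω s := by
    simpa using ((hasDerivAt_id s).add_const r).const_mul ω
  exact hl.sin.congr_deriv (by ring)

lemma solve1 {r : ℝ} (h : -r ≤ r) (ω : ℝ) (hω : 0 < ω) (hcos : cos (2 * r * ω) ≠ 0) (f : X r) :
    ∃ v : X r, v + ω ^ 2 • G h v = f := by
  obtain ⟨Y, Y1, hY, hY1, h0⟩ := exists_Y r ω hω _ (ext_cont h f)
  have hYc : Continuous Y := continuous_iff_continuousAt.2 fun s => (hY s).continuousAt
  have hf := ext_cont h f
  set κ := Y r / cos (2 * r * ω) with hκ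
  have hc : Continuous fun s => ext h f s - ω ^ 2 * (Y s - κ * cos (ω * (s + r))) := by fun_prop
  let v : X r := ⟨fun s => ext h f s - ω ^ 2 * (Y s - κ * cos (ω * (s + r))), by fun_prop⟩
  have key := G_eq h (fun s => Y s - κ * cos (ω * (s + r)))
    (fun s => Y1 s - κ * (-ω * sin (ω * (s + r)))) _ hc
    (fun s => (hY s).sub ((d_cos r ω s).const_mul κ))
    (fun s => ((hY1 s).sub (((d_sin r ω s).const_mul (-ω)).const_mul κ)).congr_deriv (by ring))
    (by simp [h0]) (by
      have : ω * (r + r) = 2 * r * ω := by ring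
      simp only [this, hκ]; field_simp; ring) v (fun s => rfl)
  refine ⟨v, ?_⟩
  ext s
  simp only [ContinuousMap.add_apply, ContinuousMap.smul_apply, smul_eq_mul, key]
  simp [v, ext_apply]

lemma solve2 {r : ℝ} (hr : 0 < r) (h : -r ≤ r) (ω : ℝ) (hω : 0 < ω) (hcos : cos (2 * r * ω) = 0)
    (f : X r) : ∃ (κ : ℝ) (v : X r), v + ω ^ 2 • G h v = f - κ • ph r ω := by
  obtain ⟨Y, Y1, hY, hY1, h0⟩ := exists_Y r ω hω _ (ext_cont h f)
  have hYc : Continuous Y := continuous_iff_continuousAt.2 fun s => (hY s).continuousAt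
  have hf := ext_cont h f
  have hsin : sin (2 * r * ω) ≠ 0 := by
    intro h1
    have := sin_sq_add_cos_sq (2 * r * ω)
    rw [h1, hcos] at this
    norm_num at this
  set κ := Y r / (2 * r * sin (2 * r * ω) / (2 * ω)) with hκ
  have hc : Continuous fun s => ext h f s - κ * cos (ω * (s + r))
    - ω ^ 2 * (Y s - κ * ((s + r) * sin (ω * (s + r)) / (2 * ω))) := by fun_prop
  let v : X r := ⟨fun s => ext h f s - κ * cos (ω * (s + r))
    - ω ^ 2 * (Y s - κ * ((s + r) * sin (ω * (s + r)) / (2 * ω))), by fun_prop⟩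
  have dl : ∀ s, HasDerivAt (fun s => s + r) 1 s := fun s => (hasDerivAt_id s).add_const r
  have key := G_eq h (fun s => Y s - κ * ((s + r) * sin (ω * (s + r)) / (2 * ω)))
    (fun s => Y1 s - κ * ((sin (ω * (s + r)) + (s + r) * (ω * cos (ω * (s + r)))) / (2 * ω))) _ hc
    (fun s => ((hY s).sub ((((dl s).mul (d_sin r ω s)).div_const (2 * ω)).const_mul κ)).congr_deriv
      (by ring))
    (fun s => ((hY1 s).sub ((((d_sin r ω s).add ((dl s).mul
        ((d_cos r ω s).const_mul ω))).div_const (2 * ω)).const_mul κ)).congr_deriv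
        (by field_simp; ring))
    (by simp [h0]) (by
      have : ω * (r + r) = 2 * r * ω := by ring
      simp only [this, hκ]; field_simp; ring) v (fun s => rfl)
  refine ⟨κ, v, ?_⟩
  ext s
  simp only [ContinuousMap.add_apply, ContinuousMap.sub_apply, ContinuousMap.smul_apply,
    smul_eq_mul, key, ph_apply]
  simp [v, ext_apply]

lemma G_ph {r : ℝ} (h : -r ≤ r) (ω : ℝ) (hω : 0 < ω) (hcos : cos (2 * r * ω) = 0) :
    G h (ph r ω) = (-(1 / ω ^ 2)) • ph r ω := by
  ext s
  rw [G_eq h (fun s => -(1 / ω ^ 2) * cos (ω * (s + r)))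
    (fun s => -(1 / ω ^ 2) * (-ω * sin (ω * (s + r)))) (fun s => cos (ω * (s + r))) (by fun_prop)
    (fun s => (d_cos r ω s).const_mul _)
    (fun s => (((d_sin r ω s).const_mul (-ω)).const_mul _).congr_deriv (by field_simp))
    (by simp) (by
      have : ω * (r + r) = 2 * r * ω := by ring
      simp [this, hcos]) (ph r ω) (fun s => rfl)]
  simp [ph_apply]

/-- The linearised operator together with the eigenfunction spans everything. -/
lemma solve {r : ℝ} (hr : 0 < r) (h : -r ≤ r) (ω b : ℝ) (hω : 0 < ω) (hb : 0 < b)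
    (hcos : cos (2 * r * ω) = 0) (hb2 : cos (2 * r * √b) = 0 → b = ω ^ 2) (f : X r) :
    ∃ (κ : ℝ) (v : X r),
      v + (ω ^ 2 + b) • G h v + (ω ^ 2 * b) • G h (G h v) = f - κ • ph r ω := by
  obtain ⟨κ, w, hw⟩ := solve2 hr h ω hω hcos f
  have hbs : √b ^ 2 = b := sq_sqrt hb.le
  by_cases hh : cos (2 * r * √b) = 0
  · obtain ⟨ν, v, hv⟩ := solve2 hr h ω hω hcos w
    refine ⟨κ, v, ?_⟩
    have hw' : w = v + ω ^ 2 • G h v + ν • ph r ω := by rw [hv]; abel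
    rw [← hw, hw', hb2 hh]
    simp only [map_add, map_smul, G_ph h ω hω hcos]
    ext s
    simp only [ContinuousMap.add_apply, ContinuousMap.smul_apply, smul_eq_mul]
    field_simp
    ring
  · obtain ⟨v, hv⟩ := solve1 h (√b) (sqrt_pos.2 hb) hh w
    rw [hbs] at hv
    refine ⟨κ, v, ?_⟩
    rw [← hw, ← hv]
    simp only [map_add, map_smul]
    ext s
    simp only [ContinuousMap.add_apply, ContinuousMap.smul_apply, smul_eq_mul]
    ring

/-- The cubic nonlinearity in terms of the fourth derivative. -/
noncomputable def N {r : ℝ} (h : -r ≤ r) (α γ : ℝ) (u : X r) : X r :=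
  γ • (G h (G h u)) ^ 3 + (3 : ℝ) • (G h u) ^ 3
    + (12 : ℝ) • (D h (G h u) * G h u * D h u)
    + (3 : ℝ) • ((D h (G h u)) ^ 2 * (u - (α / 2) • G h u))

lemma N_contDiff {r : ℝ} (h : -r ≤ r) (α γ : ℝ) : ContDiff ℝ 1 (N h α γ) := by
  unfold N
  fun_prop

lemma branch {r : ℝ} (hr : 0 < r) (h : -r ≤ r) (α β γ ω b : ℝ) (hω : 0 < ω) (hb : 0 < b)
    (hcos : cos (2 * r * ω) = 0) (hb2 : cos (2 * r * √b) = 0 → b = ω ^ 2)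
    (hα : α = ω ^ 2 + b) (hβ : β = ω ^ 2 * b)
    (P : ℝ × ℝ × X r → Prop) (hP : ∀ᶠ p in 𝓝 (0 : ℝ × ℝ × X r), P p) :
    ∃ (τ μ : ℝ) (v : X r), 0 < τ ∧ P (τ, μ, v) ∧
      (ph r ω + v) + α • G h (ph r ω + v) + (β + μ) • G h (G h (ph r ω + v))
        - τ • N h α γ (ph r ω + v) = 0 := by
  set φ := ph r ω with hφ
  let L : X r →L[ℝ] X r := ContinuousLinearMap.id ℝ _ + α • G h + β • (G h).comp (G h)
  let F : ℝ × ℝ × X r → X r := fun p =>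
    L (φ + p.2.2) + p.2.1 • G h (G h (φ + p.2.2)) - p.1 • N h α γ (φ + p.2.2)
  let H : ℝ × ℝ × X r → ℝ × X r := fun p => (p.1, F p)
  have hGφ := G_ph h ω hω hcos
  have hLφ : L φ = 0 := by
    simp only [L, _root_.add_apply, _root_.smul_apply,
      ContinuousLinearMap.comp_apply, ContinuousLinearMap.id_apply, hφ, hGφ, map_smul]
    ext s
    simp only [ContinuousMap.add_apply, ContinuousMap.smul_apply, smul_eq_mul,
      ContinuousMap.zero_apply, hα, hβ]
    field_simp
    ring
  have hH0 : H 0 = (0, 0) := by simp [H, F, hLφ]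
  obtain ⟨N', hN'⟩ : ∃ N' : X r →L[ℝ] X r, HasStrictFDerivAt (N h α γ) N' (φ + 0) :=
    ⟨_, (N_contDiff h α γ).contDiffAt.hasStrictFDerivAt (by norm_num)⟩
  have d1 : HasStrictFDerivAt (fun p : ℝ × ℝ × X r => p.1)
      (ContinuousLinearMap.fst ℝ ℝ (ℝ × X r)) 0 := hasStrictFDerivAt_fst
  have d22 : HasStrictFDerivAt (fun p : ℝ × ℝ × X r => p.2)
      (ContinuousLinearMap.snd ℝ ℝ (ℝ × X r)) 0 := hasStrictFDerivAt_snd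
  have d2 : HasStrictFDerivAt (fun p : ℝ × ℝ × X r => p.2.1)
      ((ContinuousLinearMap.fst ℝ ℝ (X r)).comp (ContinuousLinearMap.snd ℝ ℝ (ℝ × X r))) 0 :=
    d22.fst
  have d3 : HasStrictFDerivAt (fun p : ℝ × ℝ × X r => φ + p.2.2)
      ((ContinuousLinearMap.snd ℝ ℝ (X r)).comp (ContinuousLinearMap.snd ℝ ℝ (ℝ × X r))) 0 :=
    d22.snd.const_add φ
  have dL := L.hasStrictFDerivAt (x := φ + (0 : ℝ × ℝ × X r).2.2)
  have dG := ((G h).comp (G h)).hasStrictFDerivAt (x := φ + (0 : ℝ × ℝ × X r).2.2)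
  have dL3 := HasStrictFDerivAt.comp (f := fun p : ℝ × ℝ × X r => φ + p.2.2) 0 dL d3
  have dG3 := HasStrictFDerivAt.comp (f := fun p : ℝ × ℝ × X r => φ + p.2.2) 0 dG d3
  have dN3 := HasStrictFDerivAt.comp (f := fun p : ℝ × ℝ × X r => φ + p.2.2) 0 hN' d3
  have dF := (dL3.add (d2.smul dG3)).sub (d1.smul dN3)
  have dH := d1.prodMk dF
  have hmap := dH.map_nhds_eq_of_surj (by
    rw [LinearMap.range_eq_top]
    rintro ⟨τ, f⟩
    obtain ⟨κ, v, hv⟩ := solve hr h ω b hω hb hcos hb2 (f + τ • N h α γ φ)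
    refine ⟨(τ, κ * ω ^ 4, v), ?_⟩
    refine Prod.ext (by simp) ?_
    have hv' : f = v + (ω ^ 2 + b) • G h v + (ω ^ 2 * b) • G h (G h v) + κ • ph r ω
        - τ • N h α γ φ := by rw [hv]; abel
    rw [hv']
    simp [L, hα, hβ, hφ, hGφ, smul_smul]
    ext s
    simp only [ContinuousMap.add_apply, ContinuousMap.smul_apply, smul_eq_mul,
      ContinuousMap.sub_apply]
    field_simp)
  have hmap' : map H (𝓝 0) = 𝓝 ((0 : ℝ), (0 : X r)) := by
    rw [← hH0]; exact hmap
  have himg : H '' {p | P p} ∈ 𝓝 ((0 : ℝ), (0 : X r)) := by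
    rw [← hmap']; exact image_mem_map hP
  have ht : Tendsto (fun τ : ℝ => (τ, (0 : X r))) (𝓝[>] 0) (𝓝 ((0 : ℝ), (0 : X r))) :=
    ((Continuous.prodMk_left (0 : X r)).tendsto 0).mono_left nhdsWithin_le_nhds
  have hev := (ht.eventually himg).and self_mem_nhdsWithin
  obtain ⟨τ, ⟨⟨τ', μ, v⟩, hp, hEq⟩, hτ⟩ := hev.exists
  have e1 : τ' = τ := congrArg Prod.fst hEq
  subst e1
  have e2 : F (τ', μ, v) = 0 := congrArg Prod.snd hEq
  refine ⟨τ', μ, v, hτ, hp, ?_⟩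
  rw [← e2]
  simp only [F, L, _root_.add_apply, _root_.smul_apply,
      ContinuousLinearMap.comp_apply, ContinuousLinearMap.id_apply, add_smul]
  abel

/-- The function with a prescribed fourth derivative and the boundary conditions. -/
lemma lift {r : ℝ} (h : -r ≤ r) (u : X r) :
    ∃ x : ℝ → ℝ, ContDiff ℝ 4 x ∧
      (∀ s : Icc (-r) r, iteratedDeriv 0 x s = G h (G h u) s) ∧
      (∀ s : Icc (-r) r, iteratedDeriv 1 x s = D h (G h u) s) ∧
      (∀ s : Icc (-r) r, iteratedDeriv 2 x s = G h u s) ∧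
      (∀ s : Icc (-r) r, iteratedDeriv 3 x s = D h u s) ∧
      (∀ s : Icc (-r) r, iteratedDeriv 4 x s = u s) := by
  have c4 := ext_cont h u
  set x4 := ext h u
  have c3 := cont_int c4 (-r)
  have d3 := hasDerivAt_int c4 (-r)
  set x3 : ℝ → ℝ := fun s => ∫ t in (-r)..s, x4 t with hx3
  have c2 := cont_int c3 r
  have d2 := hasDerivAt_int c3 r
  set x2 : ℝ → ℝ := fun s => ∫ t in r..s, x3 t with hx2
  have c1 := cont_int c2 (-r)
  have d1 := hasDerivAt_int c2 (-r)
  set x1 : ℝ → ℝ := fun s => ∫ t in (-r)..s, x2 t with hx1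
  have c0 := cont_int c1 r
  have d0 := hasDerivAt_int c1 r
  set x0 : ℝ → ℝ := fun s => ∫ t in r..s, x1 t with hx0
  have i0 : iteratedDeriv 0 x0 = x0 := iteratedDeriv_zero
  have i1 : iteratedDeriv 1 x0 = x1 := by
    rw [iteratedDeriv_succ, i0]; ext s; exact (d0 s).deriv
  have i2 : iteratedDeriv 2 x0 = x2 := by
    rw [iteratedDeriv_succ, i1]; ext s; exact (d1 s).deriv
  have i3 : iteratedDeriv 3 x0 = x3 := by
    rw [iteratedDeriv_succ, i2]; ext s; exact (d2 s).deriv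
  have i4 : iteratedDeriv 4 x0 = x4 := by
    rw [iteratedDeriv_succ, i3]; ext s; exact (d3 s).deriv
  have e4 : ∀ s : Icc (-r) r, u s = x4 s := fun s => (ext_apply h u s).symm
  have e3 : ∀ s : Icc (-r) r, D h u s = x3 s := D_eq h x3 x4 c4 d3 (by simp [hx3]) u e4
  have e2 : ∀ s : Icc (-r) r, G h u s = x2 s := E_eq h x2 x3 c3 d2 (by simp [hx2]) _ e3
  have e1 : ∀ s : Icc (-r) r, D h (G h u) s = x1 s := D_eq h x1 x2 c2 d1 (by simp [hx1]) _ e2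
  have e0 : ∀ s : Icc (-r) r, G h (G h u) s = x0 s := E_eq h x0 x1 c1 d0 (by simp [hx0]) _ e1
  refine ⟨x0, ?_, fun s => by rw [i0, e0], fun s => by rw [i1, e1], fun s => by rw [i2, e2],
    fun s => by rw [i3, e3], fun s => by rw [i4, e4]⟩
  have step : ∀ (n : ℕ) (y z : ℝ → ℝ), (∀ s, HasDerivAt y (z s) s) → ContDiff ℝ n z →
      ContDiff ℝ (n + 1 : ℕ) y := by
    intro n y z hy hz
    have : deriv y = z := by ext s; exact (hy s).deriv
    push_cast
    rw [contDiff_succ_iff_deriv]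
    refine ⟨fun s => (hy s).differentiableAt, by simp, by rwa [this]⟩
  exact step 3 _ _ d0 (step 2 _ _ d1 (step 1 _ _ d2 (step 0 _ _ d3 (contDiff_zero.2 c4))))

open Filter Topology in
lemma main {r : ℝ} (hr : 0 < r) (α β γ ω b : ℝ) (hω : 0 < ω) (hb : 0 < b)
    (hcos : cos (2 * r * ω) = 0) (hb2 : cos (2 * r * √b) = 0 → b = ω ^ 2)
    (hα : α = ω ^ 2 + b) (hβ : β = ω ^ 2 * b) (ε : ℝ) (hε : 0 < ε) :
    ∃ β' : ℝ, ∃ x : ℝ → ℝ,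
      0 < β' ∧ |β' - β| < ε ∧
      ContDiff ℝ 4 x ∧
      (∃ s ∈ Icc (-r) r, x s ≠ 0) ∧
      iteratedDeriv 1 x (-r) = 0 ∧ iteratedDeriv 3 x (-r) = 0 ∧
      x r = 0 ∧ iteratedDeriv 2 x r = 0 ∧
      (∀ s ∈ Icc (-r) r,
        iteratedDeriv 4 x s + α * iteratedDeriv 2 x s + β' * x s
          - γ * (x s) ^ 3 - 3 * (iteratedDeriv 2 x s) ^ 3
          - 12 * iteratedDeriv 1 x s * iteratedDeriv 2 x s * iteratedDeriv 3 x s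
          - 3 * (iteratedDeriv 1 x s) ^ 2 *
              (iteratedDeriv 4 x s - (α / 2) * iteratedDeriv 2 x s) = 0) ∧
      (∀ k : ℕ, k ≤ 4 → ∀ s ∈ Icc (-r) r, |iteratedDeriv k x s| < ε) := by
  have h : -r ≤ r := by linarith
  let sl : Icc (-r) r := ⟨-r, le_rfl, h⟩
  let sr : Icc (-r) r := ⟨r, h, le_rfl⟩
  have hβ0 : 0 < β := by rw [hβ]; positivity
  have hsmall : ∀ K : X r →L[ℝ] X r, ∀ᶠ p in 𝓝 (0 : ℝ × ℝ × X r),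
      ‖K (√p.1 • (ph r ω + p.2.2))‖ < ε := by
    intro K
    have hc : Continuous fun p : ℝ × ℝ × X r => ‖K (√p.1 • (ph r ω + p.2.2))‖ := by fun_prop
    exact hc.continuousAt.eventually_lt_const (by simpa using hε)
  have hne : ∀ᶠ p in 𝓝 (0 : ℝ × ℝ × X r), G h (G h (ph r ω + p.2.2)) sl ≠ 0 := by
    have hc : Continuous fun p : ℝ × ℝ × X r => G h (G h (ph r ω + p.2.2)) sl := by fun_prop
    refine hc.continuousAt.eventually_ne ?_
    have hs : ph r ω sl = 1 := by simp [ph_apply, sl]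
    simp [G_ph h ω hω hcos, hs, hω.ne']
  have hμ : ∀ᶠ p in 𝓝 (0 : ℝ × ℝ × X r), |p.2.1| < ε := by
    have hc : Continuous fun p : ℝ × ℝ × X r => |p.2.1| := by fun_prop
    exact hc.continuousAt.eventually_lt_const (by simpa using hε)
  have hμ2 : ∀ᶠ p in 𝓝 (0 : ℝ × ℝ × X r), 0 < β + p.2.1 := by
    have hc : Continuous fun p : ℝ × ℝ × X r => β + p.2.1 := by fun_prop
    exact hc.continuousAt.eventually_const_lt (by simpa using hβ0)
  obtain ⟨τ, μ, v, hτ, ⟨p1, p2, p3, p4, p5, p6, p7, p8⟩, heq⟩ :=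
    branch hr h α β γ ω b hω hb hcos hb2 hα hβ _
      (hμ2.and <| hμ.and <| hne.and <| (hsmall ((G h).comp (G h))).and <|
        (hsmall ((D h).comp (G h))).and <| (hsmall (G h)).and <| (hsmall (D h)).and
        (hsmall (ContinuousLinearMap.id ℝ _)))
  obtain ⟨x, hx, x0, x1, x2, x3, x4⟩ := lift h (√τ • (ph r ω + v))
  have ht : √τ ≠ 0 := (sqrt_pos.2 hτ).ne'
  have ht2 : √τ ^ 2 = τ := sq_sqrt hτ.le
  simp only at p1 p2 p3 p4 p5 p6 p7 p8
  simp only [iteratedDeriv_zero] at x0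
  have zD : ∀ f : X r, D h f sl = 0 := fun f => by rw [D_apply]; simp [sl]
  have zE : ∀ f : X r, G h f sr = 0 := fun f => by
    show E h (D h f) sr = 0
    rw [E_apply]; simp [sr]
  refine ⟨β + μ, x, p1, by simpa using p2, hx, ⟨-r, sl.2, ?_⟩, ?_, ?_, ?_, ?_, ?_, ?_⟩
  · rw [x0 sl]
    rw [map_smul, map_smul]
    exact mul_ne_zero ht p3
  · rw [x1 sl, zD]
  · rw [x3 sl, zD]
  · rw [x0 sr, zE]
  · rw [x2 sr, zE]
  · intro s hs
    have e := congrArg (fun f : X r => f ⟨s, hs⟩) heq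
    rw [x0 ⟨s, hs⟩, x1 ⟨s, hs⟩, x2 ⟨s, hs⟩, x3 ⟨s, hs⟩, x4 ⟨s, hs⟩]
    generalize ph r ω + v = u at e
    simp only [N, map_smul, ContinuousMap.add_apply, ContinuousMap.smul_apply, smul_eq_mul,
      ContinuousMap.sub_apply, ContinuousMap.mul_apply, ContinuousMap.pow_apply,
      ContinuousMap.zero_apply] at e ⊢
    rw [← ht2] at e
    linear_combination √τ * e
  · intro k hk s hs
    have bd : ∀ (f : X r), ‖f‖ < ε → |f ⟨s, hs⟩| < ε := fun f hf =>
      (f.norm_coe_le_norm ⟨s, hs⟩).trans_lt hf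
    interval_cases k
    · rw [iteratedDeriv_zero, x0 ⟨s, hs⟩]; exact bd _ p4
    · rw [x1 ⟨s, hs⟩]; exact bd _ p5
    · rw [x2 ⟨s, hs⟩]; exact bd _ p6
    · rw [x3 ⟨s, hs⟩]; exact bd _ p7
    · rw [x4 ⟨s, hs⟩]; exact bd _ p8

end Rod


/-- At a simple point, bifurcation occurs with respect to the foundation
parameter `β` alone, with `α` and `γ` fixed. -/
theorem stmt_16 (r : ℝ) (hr : 0 < r)
    (c : ℕ → ℝ)
    (hc : ∀ k : ℕ, c k = -(π / r) ^ 2 * ((2 * (k : ℝ) - 1) / 4) ^ 2)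
    (m : ℕ) (hm : 1 ≤ m)
    (α₀ β₀ γ₀ : ℝ) (hα₀ : 0 < α₀) (hβ₀ : 0 < β₀) (hγ₀ : 0 < γ₀)
    (hray : β₀ = -(c m) * α₀ - (c m) ^ 2)
    (hsimple : ∀ k : ℕ, 1 ≤ k → k ≠ m → β₀ ≠ -(c k) * α₀ - (c k) ^ 2) :
    ∀ ε > 0, ∃ β : ℝ, ∃ x : ℝ → ℝ,
      0 < β ∧ |β - β₀| < ε ∧
      ContDiff ℝ 4 x ∧
      (∃ s ∈ Icc (-r) r, x s ≠ 0) ∧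
      iteratedDeriv 1 x (-r) = 0 ∧ iteratedDeriv 3 x (-r) = 0 ∧
      x r = 0 ∧ iteratedDeriv 2 x r = 0 ∧
      (∀ s ∈ Icc (-r) r,
        iteratedDeriv 4 x s + α₀ * iteratedDeriv 2 x s + β * x s
          - γ₀ * (x s) ^ 3 - 3 * (iteratedDeriv 2 x s) ^ 3
          - 12 * iteratedDeriv 1 x s * iteratedDeriv 2 x s * iteratedDeriv 3 x s
          - 3 * (iteratedDeriv 1 x s) ^ 2 *
              (iteratedDeriv 4 x s - (α₀ / 2) * iteratedDeriv 2 x s) = 0) ∧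
      (∀ k : ℕ, k ≤ 4 → ∀ s ∈ Icc (-r) r, |iteratedDeriv k x s| < ε) := by
  have hπ := Real.pi_pos
  have hm1 : (1 : ℝ) ≤ m := by exact_mod_cast hm
  set ω : ℝ := π / r * ((2 * (m : ℝ) - 1) / 4) with hω
  have hωp : 0 < ω := by
    have : 0 < (2 * (m : ℝ) - 1) / 4 := by linarith
    positivity
  have hcm : c m = -ω ^ 2 := by rw [hc, hω]; ring
  have hb : 0 < α₀ - ω ^ 2 := by
    have h1 : 0 < ω ^ 2 * (α₀ - ω ^ 2) := by
      have : ω ^ 2 * (α₀ - ω ^ 2) = β₀ := by rw [hray, hcm]; ring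
      rwa [this]
    exact (pos_iff_pos_of_mul_pos h1).1 (by positivity)
  have hcos : cos (2 * r * ω) = 0 := by
    rw [Real.cos_eq_zero_iff]
    refine ⟨(m : ℤ) - 1, ?_⟩
    rw [hω]
    push_cast
    field_simp
    ring
  have hb2 : cos (2 * r * √(α₀ - ω ^ 2)) = 0 → α₀ - ω ^ 2 = ω ^ 2 := by
    intro h0
    obtain ⟨n, hn⟩ := Real.cos_eq_zero_iff.1 h0
    have hpos : 0 < 2 * r * √(α₀ - ω ^ 2) := by
      have := sqrt_pos.2 hb
      positivity
    have hn0 : 0 ≤ n := by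
      by_contra hneg
      have h1 : (n : ℝ) ≤ -1 := by exact_mod_cast (by omega : n ≤ -1)
      have h2 : (2 * (n : ℝ) + 1) * π / 2 ≤ 0 := by nlinarith
      linarith
    obtain ⟨j, rfl⟩ := Int.eq_ofNat_of_zero_le hn0
    have hs : √(α₀ - ω ^ 2) = π / r * ((2 * ((j + 1 : ℕ) : ℝ) - 1) / 4) := by
      push_cast at hn ⊢
      field_simp
      field_simp at hn
      linarith
    have hk : c (j + 1) = -(α₀ - ω ^ 2) := by
      rw [hc, ← sq_sqrt hb.le, hs]; ring
    have hjm : j + 1 = m := by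
      by_contra hne
      refine hsimple (j + 1) (by omega) hne ?_
      rw [hray, hk, hcm]; ring
    rw [hjm, hcm] at hk
    linarith
  intro ε hε
  exact Rod.main hr α₀ β₀ γ₀ ω (α₀ - ω ^ 2) hωp hb hcos hb2 (by ring)
    (by rw [hray, hcm]; ring) ε hε
end

section
/- Let r>0 and let α_0>0, β_0>0, γ_0>0 be such that β_0 = -c_m·α_0 - c_m^2 for some integer m≥1, where c_m = -(π/r)^2·((2m-1)/4)^2. Consider the metric space M = C([-r,r],ℝ) × ℝ^3, where C([-r,r],ℝ) carries the supremum norm, and let S ⊆ M be the set of all tuples (x, α, β, γ) with α,β,γ > 0 such that x is four times continuously differentiable, not identically zero, satisfies the boundary conditions x'(-r) = x'''(-r) = 0, x(r) = x''(r) = 0, and satisfies x'''' + α·x'' + β·x - γ·x^3 - 3·(x'')^3 - 12·x'·x''·x''' - 3·(x')^2·(x'''' - (α/2)·x'') = 0 on [-r,r]. Then there exists a connected subset C of M with (0, α_0, β_0, γ_0) ∈ C, C \ {(0, α_0, β_0, γ_0)} ⊆ S, and C ≠ {(0, α_0, β_0, γ_0)}. (The point (0, α_0, β_0, γ_0) is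 a branching point: a continuum of nontrivial solutions emanates from it.) -/
open Real Set

lemma rod_le {r : ℝ} (hr : 0 < r) : -r ≤ r := by linarith

/-- constant extension of a continuous function to the line -/
noncomputable def rodExt (r : ℝ) (hr : 0 < r) (f : C(Icc (-r) r, ℝ)) : ℝ → ℝ :=
  IccExtend (rod_le hr) f

lemma rodExt_cont (r : ℝ) (hr : 0 < r) (f : C(Icc (-r) r, ℝ)) : Continuous (rodExt r hr f) :=
  f.continuous.Icc_extend'

lemma rodExt_mem (r : ℝ) (hr : 0 < r) (f : C(Icc (-r) r, ℝ)) (t : Icc (-r) r) :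
    rodExt r hr f t = f t := IccExtend_val _ _ t

/-- primitive vanishing at `-r` -/
noncomputable def rodP (r : ℝ) (g : ℝ → ℝ) : ℝ → ℝ := fun t => ∫ s in (-r)..t, g s

lemma rodP_deriv (r : ℝ) (g : ℝ → ℝ) (hg : Continuous g) (t : ℝ) :
    HasDerivAt (rodP r g) (g t) t :=
  intervalIntegral.integral_hasDerivAt_right (hg.intervalIntegrable _ _)
    (hg.stronglyMeasurableAtFilter _ _) hg.continuousAt

lemma rodP_cont (r : ℝ) (g : ℝ → ℝ) (hg : Continuous g) : Continuous (rodP r g) :=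
  continuous_iff_continuousAt.2 fun t => (rodP_deriv r g hg t).continuousAt

lemma rodP_left (r : ℝ) (g : ℝ → ℝ) : rodP r g (-r) = 0 := by simp [rodP]

/-- integration from `-r` as a bounded operator -/
noncomputable def rodJ (r : ℝ) (hr : 0 < r) : C(Icc (-r) r, ℝ) →L[ℝ] C(Icc (-r) r, ℝ) :=
  LinearMap.mkContinuous
    { toFun := fun f => ⟨fun t => rodP r (rodExt r hr f) t,
        (rodP_cont r _ (rodExt_cont r hr f)).comp continuous_subtype_val⟩
      map_add' := by
        intro f g
        ext t
        exact intervalIntegral.integral_add (μ := MeasureTheory.volume)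
          ((rodExt_cont r hr f).intervalIntegrable (-r) t)
          ((rodExt_cont r hr g).intervalIntegrable (-r) t)
      map_smul' := by
        intro a f
        ext t
        exact intervalIntegral.integral_smul a (rodExt r hr f) }
    (2 * r)
    (by
      intro f
      rw [ContinuousMap.norm_le _ (by positivity)]
      intro t
      have h := intervalIntegral.norm_integral_le_of_norm_le_const (a := -r) (b := t) (C := ‖f‖)
        (f := rodExt r hr f) (fun x _ => f.norm_coe_le_norm _)
      have ht := t.2
      simp only [mem_Icc] at ht
      rw [abs_of_nonneg (by linarith)] at h
      refine h.trans ?_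
      have := norm_nonneg f
      nlinarith)

lemma rodJ_apply (r : ℝ) (hr : 0 < r) (f : C(Icc (-r) r, ℝ)) (t : Icc (-r) r) :
    rodJ r hr f t = rodP r (rodExt r hr f) t := rfl

lemma rodJ_of_deriv (r : ℝ) (hr : 0 < r) (f : C(Icc (-r) r, ℝ)) (v : ℝ → ℝ)
    (hv : ∀ t : Icc (-r) r, HasDerivAt v (f t) t) (t : Icc (-r) r) :
    rodJ r hr f t = v t - v (-r) := by
  rw [rodJ_apply]
  apply intervalIntegral.integral_eq_sub_of_hasDerivAt
  · intro x hx
    rw [uIcc_of_le t.2.1] at hx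
    have hx' : x ∈ Icc (-r) r := ⟨hx.1, hx.2.trans t.2.2⟩
    have := hv ⟨x, hx'⟩
    rwa [← rodExt_mem r hr f ⟨x, hx'⟩] at this
  · exact (rodExt_cont r hr f).intervalIntegrable _ _

/-- right end point -/
def rodR (r : ℝ) (hr : 0 < r) : Icc (-r) r := ⟨r, rod_le hr, le_refl r⟩

/-- left end point -/
def rodL (r : ℝ) (hr : 0 < r) : Icc (-r) r := ⟨-r, le_refl _, rod_le hr⟩

/-- inverse of the second derivative with the mixed boundary conditions -/
noncomputable def rodK (r : ℝ) (hr : 0 < r) : C(Icc (-r) r, ℝ) →L[ℝ] C(Icc (-r) r, ℝ) :=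
  (rodJ r hr).comp (rodJ r hr) -
    ((ContinuousMap.evalCLM ℝ (rodR r hr)).comp
      ((rodJ r hr).comp (rodJ r hr))).smulRight (1 : C(Icc (-r) r, ℝ))

lemma rodK_apply (r : ℝ) (hr : 0 < r) (f : C(Icc (-r) r, ℝ)) (t : Icc (-r) r) :
    rodK r hr f t = rodJ r hr (rodJ r hr f) t - rodJ r hr (rodJ r hr f) (rodR r hr) := by
  simp [rodK]

lemma rodK_of_deriv (r : ℝ) (hr : 0 < r) (h : C(Icc (-r) r, ℝ)) (v v1 : ℝ → ℝ)
    (hv : ∀ t : Icc (-r) r, HasDerivAt v (v1 t) t)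
    (hv1 : ∀ t : Icc (-r) r, HasDerivAt v1 (h t) t) (h0 : v1 (-r) = 0) (h1 : v r = 0)
    (t : Icc (-r) r) : rodK r hr h t = v t := by
  have e1 : ∀ t, rodJ r hr h t = v1 t := by
    intro t
    rw [rodJ_of_deriv r hr h v1 hv1, h0, sub_zero]
  have e2 : ∀ t, rodJ r hr (rodJ r hr h) t = v t - v (-r) := by
    intro t
    exact rodJ_of_deriv r hr _ v (fun t => by rw [e1]; exact hv t) t
  rw [rodK_apply, e2, e2]
  simp [rodR, h1]

/-- `cos (μ (t + r))` -/
noncomputable def rodC (r μ : ℝ) : C(Icc (-r) r, ℝ) := ⟨fun t => cos (μ * (t + r)), by fun_prop⟩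

/-- `sin (μ (t + r))` -/
noncomputable def rodS (r μ : ℝ) : C(Icc (-r) r, ℝ) := ⟨fun t => sin (μ * (t + r)), by fun_prop⟩

lemma rod_hcos (r μ t : ℝ) :
    HasDerivAt (fun t => cos (μ * (t + r))) (-(μ * sin (μ * (t + r)))) t := by
  have h : HasDerivAt (fun t => μ * (t + r)) (μ * 1) t := ((hasDerivAt_id t).add_const r).const_mul μ
  convert h.cos using 1
  ring

lemma rod_hsin (r μ t : ℝ) :
    HasDerivAt (fun t => sin (μ * (t + r))) (μ * cos (μ * (t + r))) t := by
  have h : HasDerivAt (fun t => μ * (t + r)) (μ * 1) t := ((hasDerivAt_id t).add_const r).const_mul μ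
  convert h.sin using 1
  ring

lemma rodK_cos (r : ℝ) (hr : 0 < r) (μ : ℝ) (hμ : 0 < μ) (hdeg : cos (μ * (r + r)) = 0) :
    rodK r hr (rodC r μ) = (-(μ ^ 2)⁻¹) • rodC r μ := by
  ext t
  rw [rodK_of_deriv r hr _ (fun t => (-(μ ^ 2)⁻¹) * cos (μ * (t + r)))
    (fun t => (-(μ ^ 2)⁻¹) * (-(μ * sin (μ * (t + r)))))]
  · simp [rodC]
  · intro t
    exact (rod_hcos r μ t).const_mul _
  · intro t
    refine ((((rod_hsin r μ t).const_mul μ).neg).const_mul (-(μ ^ 2)⁻¹)).congr_deriv ?_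
    simp only [rodC, ContinuousMap.coe_mk]
    field_simp
  · simp
  · simp [hdeg]

/-- Volterra solution operator of the oscillator equation with zero initial data -/
noncomputable def rodV (r : ℝ) (hr : 0 < r) (μ : ℝ) : C(Icc (-r) r, ℝ) →L[ℝ] C(Icc (-r) r, ℝ) :=
  μ⁻¹ • ((ContinuousLinearMap.mul ℝ C(Icc (-r) r, ℝ) (rodS r μ)).comp
      ((rodJ r hr).comp (ContinuousLinearMap.mul ℝ C(Icc (-r) r, ℝ) (rodC r μ)))
    - (ContinuousLinearMap.mul ℝ C(Icc (-r) r, ℝ) (rodC r μ)).comp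
      ((rodJ r hr).comp (ContinuousLinearMap.mul ℝ C(Icc (-r) r, ℝ) (rodS r μ))))

lemma rodV_apply (r : ℝ) (hr : 0 < r) (μ : ℝ) (f : C(Icc (-r) r, ℝ)) (t : Icc (-r) r) :
    rodV r hr μ f t = μ⁻¹ * (sin (μ * (t + r)) * rodP r (rodExt r hr (rodC r μ * f)) t
      - cos (μ * (t + r)) * rodP r (rodExt r hr (rodS r μ * f)) t) := by
  simp [rodV, rodJ_apply, rodC, rodS]

lemma rodV_spec (r : ℝ) (hr : 0 < r) (μ : ℝ) (hμ : 0 < μ) (f : C(Icc (-r) r, ℝ)) :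
    ∃ v v1 : ℝ → ℝ, (∀ t : Icc (-r) r, rodV r hr μ f t = v t) ∧
      (∀ t : Icc (-r) r, HasDerivAt v (v1 t) t) ∧
      (∀ t : Icc (-r) r, HasDerivAt v1 (f t - μ ^ 2 * v t) t) ∧ v1 (-r) = 0 := by
  have hc := rodP_deriv r _ (rodExt_cont r hr (rodC r μ * f))
  have hs := rodP_deriv r _ (rodExt_cont r hr (rodS r μ * f))
  refine ⟨fun t => μ⁻¹ * (sin (μ * (t + r)) * rodP r (rodExt r hr (rodC r μ * f)) t
      - cos (μ * (t + r)) * rodP r (rodExt r hr (rodS r μ * f)) t),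
    fun t => cos (μ * (t + r)) * rodP r (rodExt r hr (rodC r μ * f)) t
      + sin (μ * (t + r)) * rodP r (rodExt r hr (rodS r μ * f)) t,
    fun t => rodV_apply r hr μ f t, ?_, ?_, ?_⟩
  · intro t
    have h := (((rod_hsin r μ t).mul (hc t)).sub ((rod_hcos r μ t).mul (hs t))).const_mul μ⁻¹
    rw [rodExt_mem, rodExt_mem] at h
    refine h.congr_deriv ?_
    simp only [rodC, rodS, ContinuousMap.mul_apply, ContinuousMap.coe_mk]
    field_simp
    ring
  · intro t
    have h := ((rod_hcos r μ t).mul (hc t)).add ((rod_hsin r μ t).mul (hs t))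
    rw [rodExt_mem, rodExt_mem] at h
    refine h.congr_deriv ?_
    simp only [rodC, rodS, ContinuousMap.mul_apply, ContinuousMap.coe_mk]
    have h1 := sin_sq_add_cos_sq (μ * ((t : ℝ) + r))
    have h2 : μ ^ 2 * μ⁻¹ = μ := by field_simp
    rw [← mul_assoc (μ ^ 2), h2]
    linear_combination f t * h1
  · simp [rodP_left]

/-- solvability of `w + μ² K w = f` in the nondegenerate case -/
lemma rod_solve_nondeg (r : ℝ) (hr : 0 < r) (μ : ℝ) (hμ : 0 < μ) (hdeg : cos (μ * (r + r)) ≠ 0) :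
    ∃ R : C(Icc (-r) r, ℝ) →L[ℝ] C(Icc (-r) r, ℝ),
      ∀ f, R f + μ ^ 2 • rodK r hr (R f) = f := by
  refine ⟨ContinuousLinearMap.id ℝ _ - μ ^ 2 • (rodV r hr μ -
    (((cos (μ * (r + r)))⁻¹ • (ContinuousMap.evalCLM ℝ (rodR r hr)).comp (rodV r hr μ)).smulRight
      (rodC r μ))), ?_⟩
  intro f
  obtain ⟨v, v1, h1, h2, h3, h4⟩ := rodV_spec r hr μ hμ f
  ext t
  simp only [ContinuousMap.add_apply, ContinuousMap.smul_apply]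
  set a := (cos (μ * (r + r)))⁻¹ * v r with ha
  rw [rodK_of_deriv r hr _ (fun t => v t - a * cos (μ * (t + r)))
    (fun t => v1 t - a * (-(μ * sin (μ * (t + r)))))]
  · have := h1 (rodR r hr)
    simp [h1, rodC, ha]
    simp [rodR]
  · intro t
    exact (h2 t).sub ((rod_hcos r μ t).const_mul _)
  · intro t
    refine ((h3 t).sub ((((rod_hsin r μ t).const_mul μ).neg).const_mul a)).congr_deriv ?_
    simp [h1, rodC, ha]
    simp [rodR]
    ring
  · simp [h4]
  · have := inv_mul_cancel₀ hdeg
    rw [ha]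
    linear_combination (-v r) * this

/-- solvability of `w + μ² K w = f` in the degenerate case -/
lemma rod_solve_deg (r : ℝ) (hr : 0 < r) (μ : ℝ) (hμ : 0 < μ) (hdeg : cos (μ * (r + r)) = 0) :
    ∃ (R : C(Icc (-r) r, ℝ) →L[ℝ] C(Icc (-r) r, ℝ)) (φ : C(Icc (-r) r, ℝ) →L[ℝ] ℝ),
      ∀ f, R f + μ ^ 2 • rodK r hr (R f) = f - φ f • rodC r μ := by
  have hne : rodV r hr μ (rodC r μ) (rodR r hr) ≠ 0 := by
    rw [rodV_apply]
    have hs : sin (μ * (r + r)) ≠ 0 := by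
      intro h
      have := sin_sq_add_cos_sq (μ * (r + r))
      rw [h, hdeg] at this
      norm_num at this
    have hp : 0 < rodP r (rodExt r hr (rodC r μ * rodC r μ)) r := by
      apply intervalIntegral.integral_pos (by linarith)
        (rodExt_cont r hr _).continuousOn
      · intro x hx
        exact mul_self_nonneg (rodC r μ _)
      · refine ⟨-r, ⟨le_refl _, rod_le hr⟩, ?_⟩
        have := rodExt_mem r hr (rodC r μ * rodC r μ) (rodL r hr)
        rw [show ((rodL r hr : Icc (-r) r) : ℝ) = -r from rfl] at this
        rw [this]
        simp [rodC, rodL]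
    simp only [rodR, hdeg]
    have := hp.ne'
    simp [hs, this, hμ.ne']
  set φ : C(Icc (-r) r, ℝ) →L[ℝ] ℝ := (rodV r hr μ (rodC r μ) (rodR r hr))⁻¹ •
    (ContinuousMap.evalCLM ℝ (rodR r hr)).comp (rodV r hr μ) with hφ
  refine ⟨(ContinuousLinearMap.id ℝ _ - μ ^ 2 • rodV r hr μ).comp
    (ContinuousLinearMap.id ℝ _ - φ.smulRight (rodC r μ)), φ, ?_⟩
  intro f
  set g := f - φ f • rodC r μ with hg
  have hz : rodV r hr μ g (rodR r hr) = 0 := by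
    simp only [hg, map_sub, map_smul, ContinuousMap.sub_apply, ContinuousMap.smul_apply, hφ]
    simp
    field_simp
    simp
  obtain ⟨v, v1, h1, h2, h3, h4⟩ := rodV_spec r hr μ hμ g
  have e : ((ContinuousLinearMap.id ℝ _ - μ ^ 2 • rodV r hr μ).comp
    (ContinuousLinearMap.id ℝ _ - φ.smulRight (rodC r μ))) f = g - μ ^ 2 • rodV r hr μ g := by
    simp [hg, smul_sub]
    abel
  rw [e]
  ext t
  simp only [ContinuousMap.add_apply, ContinuousMap.smul_apply]
  rw [rodK_of_deriv r hr _ v v1 h2 _ h4]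
  · simp [h1]
  · rw [h1] at hz
    exact hz
  · intro t
    convert h3 t using 1
    simp [h1]

lemma rod_linear (r : ℝ) (hr : 0 < r) (μ ν : ℝ) (hμ : 0 < μ) (hν : 0 < ν)
    (hdeg : cos (μ * (r + r)) = 0) :
    ∃ (e : C(Icc (-r) r, ℝ)) (W : C(Icc (-r) r, ℝ) →L[ℝ] C(Icc (-r) r, ℝ))
      (a b : C(Icc (-r) r, ℝ) →L[ℝ] ℝ),
      0 < rodK r hr (rodK r hr e) (rodL r hr) ∧
      e + (μ ^ 2 + ν ^ 2) • rodK r hr e + (μ ^ 2 * ν ^ 2) • rodK r hr (rodK r hr e) = 0 ∧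
      ∀ f, W f + (μ ^ 2 + ν ^ 2) • rodK r hr (W f)
        + (μ ^ 2 * ν ^ 2) • rodK r hr (rodK r hr (W f))
        + a f • rodK r hr e + b f • rodK r hr (rodK r hr e) = f := by
  obtain ⟨R, φ, hR⟩ := rod_solve_deg r hr μ hμ hdeg
  have hc := rodK_cos r hr μ hμ hdeg
  set c := rodC r μ with hcdef
  set K := rodK r hr with hK
  have hcl : c (rodL r hr) = 1 := by simp [hcdef, rodC, rodL]
  -- the simple kernel cases
  have simple : ∀ W : C(Icc (-r) r, ℝ) →L[ℝ] C(Icc (-r) r, ℝ),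
      (∀ f, W f + (μ ^ 2 + ν ^ 2) • K (W f) + (μ ^ 2 * ν ^ 2) • K (K (W f)) = f - φ f • c) →
      ∃ (e : C(Icc (-r) r, ℝ)) (W : C(Icc (-r) r, ℝ) →L[ℝ] C(Icc (-r) r, ℝ))
      (a b : C(Icc (-r) r, ℝ) →L[ℝ] ℝ),
      0 < K (K e) (rodL r hr) ∧
      e + (μ ^ 2 + ν ^ 2) • K e + (μ ^ 2 * ν ^ 2) • K (K e) = 0 ∧
      ∀ f, W f + (μ ^ 2 + ν ^ 2) • K (W f) + (μ ^ 2 * ν ^ 2) • K (K (W f))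
        + a f • K e + b f • K (K e) = f := by
    intro W hW
    refine ⟨c, W, 0, (μ ^ 4) • φ, ?_, ?_, ?_⟩
    · simp only [hc, map_smul, ContinuousMap.smul_apply, hcl]
      simp only [smul_eq_mul]
      have : 0 < (μ ^ 2)⁻¹ := by positivity
      nlinarith
    · simp only [hc, map_smul]
      match_scalars
      field_simp
      ring
    · intro f
      rw [hW]
      simp only [hc, map_smul, _root_.zero_apply, _root_.smul_apply,
        smul_eq_mul]
      match_scalars <;> field_simp <;> ring
  by_cases hdeg2 : cos (ν * (r + r)) = 0
  · by_cases hne : μ ^ 2 = ν ^ 2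
    · apply simple (R.comp R)
      intro f
      have h1 := hR (R f)
      have h2 := hR f
      have h3 := congrArg K h1
      simp only [map_add, map_sub, map_smul, hc] at h3
      simp only [ContinuousLinearMap.comp_apply]
      rw [← hne]
      linear_combination (norm := (match_scalars <;> (try field_simp) <;> ring))
        h1 + μ ^ 2 • h3 + h2
    · obtain ⟨R2, φ2, hR2⟩ := rod_solve_deg r hr ν hν hdeg2
      have hd := rodK_cos r hr ν hν hdeg2
      rw [← hK] at hd hR2
      set d := rodC r ν with hddef
      have hdl : d (rodL r hr) = 1 := by simp [hddef, rodC, rodL]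
      have hne' : μ ^ 2 - ν ^ 2 ≠ 0 := sub_ne_zero.2 hne
      have hW : ∀ f, R2 (R f) + (μ ^ 2 + ν ^ 2) • K (R2 (R f)) + (μ ^ 2 * ν ^ 2) • K (K (R2 (R f)))
          = f - φ f • c - ((1 - μ ^ 2 * (ν ^ 2)⁻¹) * φ2 (R f)) • d := by
        intro f
        have h1 := hR2 (R f)
        have h2 := hR f
        have h3 := congrArg K h1
        simp only [map_add, map_sub, map_smul, hd] at h3
        linear_combination (norm := (match_scalars <;> (try field_simp) <;> ring))
          h1 + μ ^ 2 • h3 + h2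
      -- coefficient functionals
      set p := φ with hp
      set q : C(Icc (-r) r, ℝ) →L[ℝ] ℝ := (1 - μ ^ 2 * (ν ^ 2)⁻¹) • φ2.comp R with hq
      set a : C(Icc (-r) r, ℝ) →L[ℝ] ℝ := (μ ^ 2 - ν ^ 2)⁻¹ • (ν ^ 4 • q - μ ^ 4 • p) with ha
      refine ⟨c + d, R2.comp R, a, μ ^ 4 • p + μ ^ 2 • a, ?_, ?_, ?_⟩
      · simp only [hc, hd, map_add, map_smul, ContinuousMap.add_apply, ContinuousMap.smul_apply,
          hcl, hdl]
        simp only [smul_eq_mul]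
        have h1 : 0 < (μ ^ 2)⁻¹ := by positivity
        have h2 : 0 < (ν ^ 2)⁻¹ := by positivity
        nlinarith
      · simp only [hc, hd, map_add, map_smul]
        match_scalars <;> field_simp <;> ring
      · intro f
        simp only [ContinuousLinearMap.comp_apply]
        rw [hW]
        have hqf : q f = (1 - μ ^ 2 * (ν ^ 2)⁻¹) * φ2 (R f) := by simp [hq]
        have haf : a f = (μ ^ 2 - ν ^ 2)⁻¹ * (ν ^ 4 * q f - μ ^ 4 * p f) := by simp [ha]
        rw [← hqf]
        have hbf : (μ ^ 4 • p + μ ^ 2 • a) f = μ ^ 4 * p f + μ ^ 2 * a f := by simp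
        rw [hbf, haf]
        generalize q f = y
        generalize p f = x
        simp only [hc, hd, map_add, map_smul]
        match_scalars <;> field_simp <;> ring
  · obtain ⟨R2, hR2⟩ := rod_solve_nondeg r hr ν hν hdeg2
    rw [← hK] at hR2
    apply simple (R2.comp R)
    intro f
    have h1 := hR2 (R f)
    have h2 := hR f
    have h3 := congrArg K h1
    simp only [map_add, map_smul] at h3
    simp only [ContinuousLinearMap.comp_apply]
    linear_combination (norm := (match_scalars <;> (try field_simp) <;> ring))
      h1 + μ ^ 2 • h3 + h2

lemma rod_zero_deriv {X E : Type*} [NormedAddCommGroup X] [NormedSpace ℝ X]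
    [NormedAddCommGroup E] [NormedSpace ℝ E] (g : X → ℝ) (h : X → E)
    (hg : DifferentiableAt ℝ g 0) (hh : DifferentiableAt ℝ h 0) (g0 : g 0 = 0) (h0 : h 0 = 0) :
    HasFDerivAt (fun x => g x • h x) (0 : X →L[ℝ] E) 0 := by
  refine (hg.hasFDerivAt.smul hh.hasFDerivAt).congr_fderiv ?_
  ext x
  simp [g0, h0]

lemma rod_ift {E : Type*} [NormedCommRing E] [NormedAlgebra ℝ E] [CompleteSpace E]
    (K J W : E →L[ℝ] E) (a b : E →L[ℝ] ℝ) (e : E) (α β γ : ℝ)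
    (he : e + α • K e + β • K (K e) = 0)
    (hW : ∀ f, W f + α • K (W f) + β • K (K (W f)) + a f • K e + b f • K (K e) = f) :
    ∃ δ : ℝ, 0 < δ ∧ ∃ f : ℝ → E, ContinuousOn f (Icc 0 δ) ∧ f 0 = 0 ∧
      ∀ ε ∈ Icc 0 δ, ∀ u, u = e + W (f ε) → ∀ A B, A = α + a (f ε) → B = β + b (f ε) →
        u + A • K u + B • K (K u) - ε ^ 2 • (γ • (K (K u)) ^ 3 + (3 : ℝ) • (K u) ^ 3
          + (12 : ℝ) • (J (K u) * K u * J u)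
          + (3 : ℝ) • ((J (K u)) ^ 2 * (u - (A / 2) • K u))) = 0 := by
  set N : ℝ × E → E := fun p => γ • (K (K (e + W p.2))) ^ 3 + (3 : ℝ) • (K (e + W p.2)) ^ 3
          + (12 : ℝ) • (J (K (e + W p.2)) * K (e + W p.2) * J (e + W p.2))
          + (3 : ℝ) • ((J (K (e + W p.2))) ^ 2 * (e + W p.2 - ((α + a p.2) / 2) • K (e + W p.2)))
    with hN
  have hNs : ContDiff ℝ 1 N := by
    rw [hN]
    fun_prop
  set H : ℝ × E → E := fun p => p.2 + a p.2 • K (W p.2) + b p.2 • K (K (W p.2))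
    - p.1 • (p.1 • N p) with hH
  have hHs : ContDiff ℝ 1 H := by
    rw [hH]
    fun_prop
  have hd : HasFDerivAt H (ContinuousLinearMap.snd ℝ ℝ E) 0 := by
    have h1 := rod_zero_deriv (fun p : ℝ × E => a p.2) (fun p => K (W p.2))
      (by fun_prop) (by fun_prop) (by simp) (by simp)
    have h2 := rod_zero_deriv (fun p : ℝ × E => b p.2) (fun p => K (K (W p.2)))
      (by fun_prop) (by fun_prop) (by simp) (by simp)
    have h3 := rod_zero_deriv (fun p : ℝ × E => p.1) (fun p => p.1 • N p)
      (by fun_prop) (differentiableAt_fst.smul (hNs.differentiable (by norm_num)).differentiableAt)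
      (by simp) (by simp)
    have h4 := (((ContinuousLinearMap.snd ℝ ℝ E).hasFDerivAt (x := 0)).add h1 |>.add h2).sub h3
    refine h4.congr_fderiv ?_
    simp
  have hsd : HasStrictFDerivAt H (ContinuousLinearMap.snd ℝ ℝ E) 0 :=
    hHs.contDiffAt.hasStrictFDerivAt' hd (by norm_num)
  have hΦ : HasStrictFDerivAt (fun p : ℝ × E => (p.1, H p))
      ((ContinuousLinearEquiv.refl ℝ (ℝ × E) : (ℝ × E) ≃L[ℝ] (ℝ × E)) : (ℝ × E) →L[ℝ] (ℝ × E)) 0 := by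
    refine (hasStrictFDerivAt_fst.prodMk hsd).congr_fderiv ?_
    ext <;> simp
  set Φ := hΦ.toOpenPartialHomeomorph (fun p : ℝ × E => (p.1, H p)) with hPhi
  have hΦa : ∀ p, Φ p = (p.1, H p) := fun p => rfl
  have hH0 : H 0 = 0 := by simp [hH]
  have hs0 : (0 : ℝ × E) ∈ Φ.source := hΦ.mem_toOpenPartialHomeomorph_source
  have ht0 : ((0 : ℝ), (0 : E)) ∈ Φ.target := by
    have := Φ.map_source hs0
    rwa [hΦa, hH0] at this
  have hopen : IsOpen ((fun ε : ℝ => (ε, (0 : E))) ⁻¹' Φ.target) :=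
    Φ.open_target.preimage (by fun_prop)
  obtain ⟨δ, hδ, hball⟩ := Metric.isOpen_iff.1 hopen 0 ht0
  have hsub : ∀ ε ∈ Icc 0 (δ / 2), (ε, (0 : E)) ∈ Φ.target := by
    intro ε hε
    apply hball
    rw [Metric.mem_ball, Real.dist_eq, sub_zero, abs_of_nonneg hε.1]
    linarith [hε.2]
  refine ⟨δ / 2, by linarith, fun ε => (Φ.symm (ε, 0)).2, ?_, ?_, ?_⟩
  · apply continuous_snd.comp_continuousOn
    exact Φ.continuousOn_symm.comp (by fun_prop) hsub
  · have h := Φ.left_inv hs0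
    rw [hΦa, hH0] at h
    change (Φ.symm ((0 : ℝ), 0)).2 = 0
    have h' : Φ.symm ((0 : ℝ), (0 : E)) = 0 := h
    rw [h']
    rfl
  · intro ε hε u hu A B hA hB
    have h := Φ.right_inv (hsub ε hε)
    rw [hΦa] at h
    set p := Φ.symm (ε, 0) with hp
    have h1 : p.1 = ε := congrArg Prod.fst h
    have h2 : H p = 0 := congrArg Prod.snd h
    replace hu : u = e + W p.2 := hu
    replace hA : A = α + a p.2 := hA
    replace hB : B = β + b p.2 := hB
    have key : u + A • K u + B • K (K u) - ε ^ 2 • N p = H p := by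
      rw [hH]
      simp only
      have h3 := hW p.2
      rw [hu, hA, hB, h1]
      simp only [map_add]
      linear_combination (norm := module) he + h3
    rw [h2] at key
    rw [← key, hN]
    simp only
    rw [hu, hA]

lemma rodP_congr (r : ℝ) (hr : 0 < r) (g : ℝ → ℝ) (f : C(Icc (-r) r, ℝ))
    (h : ∀ s : Icc (-r) r, g s = f s) (t : Icc (-r) r) : rodP r g t = rodJ r hr f t := by
  rw [rodJ_apply]
  apply intervalIntegral.integral_congr
  intro x hx
  rw [uIcc_of_le t.2.1] at hx
  have hx' : x ∈ Icc (-r) r := ⟨hx.1, hx.2.trans t.2.2⟩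
  exact (h ⟨x, hx'⟩).trans (rodExt_mem r hr f ⟨x, hx'⟩).symm

lemma rod_contDiff (n : ℕ) (x y : ℝ → ℝ) (h : ∀ t, HasDerivAt x (y t) t) (hy : ContDiff ℝ n y) :
    ContDiff ℝ ((n + 1 : ℕ) : WithTop ℕ∞) x := by
  have hd : deriv x = y := funext fun t => (h t).deriv
  push_cast
  rw [contDiff_succ_iff_deriv]
  refine ⟨fun t => (h t).differentiableAt, ?_, by rwa [hd]⟩
  intro h
  exact absurd h (by simp)

lemma rod_regular (r : ℝ) (hr : 0 < r) (u : C(Icc (-r) r, ℝ)) :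
    ∃ x : ℝ → ℝ, ContDiff ℝ 4 x ∧ ∀ s : Icc (-r) r,
      x s = rodK r hr (rodK r hr u) s ∧
      iteratedDeriv 1 x s = rodJ r hr (rodK r hr u) s ∧
      iteratedDeriv 2 x s = rodK r hr u s ∧
      iteratedDeriv 3 x s = rodJ r hr u s ∧
      iteratedDeriv 4 x s = u s := by
  set x4 := rodExt r hr u with hx4
  have c4 : Continuous x4 := rodExt_cont r hr u
  set x3 := rodP r x4 with hx3
  have c3 : Continuous x3 := rodP_cont r _ c4
  set x2 : ℝ → ℝ := fun t => rodP r x3 t - rodP r x3 r with hx2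
  have c2 : Continuous x2 := (rodP_cont r _ c3).sub continuous_const
  set x1 := rodP r x2 with hx1
  have c1 : Continuous x1 := rodP_cont r _ c2
  set x : ℝ → ℝ := fun t => rodP r x1 t - rodP r x1 r with hx
  have d3 : ∀ t, HasDerivAt x3 (x4 t) t := rodP_deriv r _ c4
  have d2 : ∀ t, HasDerivAt x2 (x3 t) t := fun t => (rodP_deriv r _ c3 t).sub_const _
  have d1 : ∀ t, HasDerivAt x1 (x2 t) t := rodP_deriv r _ c2
  have d0 : ∀ t, HasDerivAt x (x1 t) t := fun t => (rodP_deriv r _ c1 t).sub_const _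
  have e4 : ∀ s : Icc (-r) r, x4 s = u s := rodExt_mem r hr u
  have e3 : ∀ s : Icc (-r) r, x3 s = rodJ r hr u s := rodP_congr r hr _ _ e4
  have e2 : ∀ s : Icc (-r) r, x2 s = rodK r hr u s := by
    intro s
    rw [rodK_apply, ← rodP_congr r hr _ _ e3 s, ← rodP_congr r hr _ _ e3 (rodR r hr)]
    rfl
  have e1 : ∀ s : Icc (-r) r, x1 s = rodJ r hr (rodK r hr u) s := rodP_congr r hr _ _ e2
  have e0 : ∀ s : Icc (-r) r, x s = rodK r hr (rodK r hr u) s := by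
    intro s
    rw [rodK_apply, ← rodP_congr r hr _ _ e1 s, ← rodP_congr r hr _ _ e1 (rodR r hr)]
    rfl
  have f0 : deriv x = x1 := funext fun t => (d0 t).deriv
  have f1 : deriv x1 = x2 := funext fun t => (d1 t).deriv
  have f2 : deriv x2 = x3 := funext fun t => (d2 t).deriv
  have f3 : deriv x3 = x4 := funext fun t => (d3 t).deriv
  have k4 : ContDiff ℝ ((0 : ℕ) : WithTop ℕ∞) x4 := by
    rw [Nat.cast_zero]
    exact contDiff_zero.2 c4
  have k := rod_contDiff _ _ _ d0 (rod_contDiff _ _ _ d1 (rod_contDiff _ _ _ d2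
    (rod_contDiff _ _ _ d3 k4)))
  refine ⟨x, by simpa using k, fun s => ⟨e0 s, ?_, ?_, ?_, ?_⟩⟩
  · rw [iteratedDeriv_succ', f0, iteratedDeriv_zero, e1]
  · rw [iteratedDeriv_succ', f0, iteratedDeriv_succ', f1, iteratedDeriv_zero, e2]
  · rw [iteratedDeriv_succ', f0, iteratedDeriv_succ', f1, iteratedDeriv_succ', f2,
      iteratedDeriv_zero, e3]
  · rw [iteratedDeriv_succ', f0, iteratedDeriv_succ', f1, iteratedDeriv_succ', f2,
      iteratedDeriv_succ', f3, iteratedDeriv_zero, e4]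

lemma rodJ_left (r : ℝ) (hr : 0 < r) (f : C(Icc (-r) r, ℝ)) : rodJ r hr f (rodL r hr) = 0 :=
  rodP_left r _

lemma rodK_right (r : ℝ) (hr : 0 < r) (f : C(Icc (-r) r, ℝ)) : rodK r hr f (rodR r hr) = 0 := by
  rw [rodK_apply, sub_self]





/-- Every point of the trivial family where the linearization has nontrivial
kernel is a branching point: a continuum of nontrivial solutions emanates from
`(0,α₀,β₀,γ₀)` in `C([-r,r],ℝ) × ℝ³`. -/
theorem stmt_17 (r : ℝ) (hr : 0 < r)
    (c : ℕ → ℝ)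
    (hc : ∀ m : ℕ, c m = -(π / r) ^ 2 * ((2 * (m : ℝ) - 1) / 4) ^ 2)
    (α₀ β₀ γ₀ : ℝ) (hα₀ : 0 < α₀) (hβ₀ : 0 < β₀) (hγ₀ : 0 < γ₀)
    (m : ℕ) (hm : 1 ≤ m) (hray : β₀ = -(c m) * α₀ - (c m) ^ 2)
    (S : Set (C(Icc (-r) r, ℝ) × (ℝ × ℝ × ℝ)))
    (hS : S = {p : C(Icc (-r) r, ℝ) × (ℝ × ℝ × ℝ) |
      0 < p.2.1 ∧ 0 < p.2.2.1 ∧ 0 < p.2.2.2 ∧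
      ∃ x : ℝ → ℝ, ContDiff ℝ 4 x ∧
        (∀ s : Icc (-r) r, p.1 s = x s) ∧
        (∃ s ∈ Icc (-r) r, x s ≠ 0) ∧
        iteratedDeriv 1 x (-r) = 0 ∧ iteratedDeriv 3 x (-r) = 0 ∧
        x r = 0 ∧ iteratedDeriv 2 x r = 0 ∧
        ∀ s ∈ Icc (-r) r,
          iteratedDeriv 4 x s + p.2.1 * iteratedDeriv 2 x s + p.2.2.1 * x s
            - p.2.2.2 * (x s) ^ 3 - 3 * (iteratedDeriv 2 x s) ^ 3
            - 12 * iteratedDeriv 1 x s * iteratedDeriv 2 x s * iteratedDeriv 3 x s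
            - 3 * (iteratedDeriv 1 x s) ^ 2 *
                (iteratedDeriv 4 x s - (p.2.1 / 2) * iteratedDeriv 2 x s) = 0}) :
    ∃ C : Set (C(Icc (-r) r, ℝ) × (ℝ × ℝ × ℝ)),
      IsConnected C ∧
      ((0 : C(Icc (-r) r, ℝ)), (α₀, β₀, γ₀)) ∈ C ∧
      C \ {((0 : C(Icc (-r) r, ℝ)), (α₀, β₀, γ₀))} ⊆ S ∧
      C ≠ {((0 : C(Icc (-r) r, ℝ)), (α₀, β₀, γ₀))} := by
  -- the frequencies of the linearization
  set μ : ℝ := π / r * ((2 * (m : ℝ) - 1) / 4) with hμdef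
  have hm' : (1 : ℝ) ≤ m := by exact_mod_cast hm
  have hμ : 0 < μ := by
    have h1 : 0 < π / r := div_pos pi_pos hr
    have h2 : 0 < (2 * (m : ℝ) - 1) / 4 := by linarith
    exact mul_pos h1 h2
  have hcm : c m = -μ ^ 2 := by rw [hc, hμdef]; ring
  rw [hcm] at hray
  have hprod : β₀ = μ ^ 2 * (α₀ - μ ^ 2) := by rw [hray]; ring
  have hpos : 0 < α₀ - μ ^ 2 := by
    by_contra h
    have h1 : 0 < μ ^ 2 := by positivity
    have h2 : α₀ - μ ^ 2 ≤ 0 := not_lt.1 h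
    nlinarith
  set ν : ℝ := Real.sqrt (α₀ - μ ^ 2) with hνdef
  have hν : 0 < ν := Real.sqrt_pos.2 hpos
  have hν2 : ν ^ 2 = α₀ - μ ^ 2 := Real.sq_sqrt hpos.le
  have hdeg : cos (μ * (r + r)) = 0 := by
    rw [Real.cos_eq_zero_iff]
    refine ⟨(m : ℤ) - 1, ?_⟩
    rw [hμdef]
    push_cast
    field_simp
    ring
  obtain ⟨e, W, a, b, he0, he, hW⟩ := rod_linear r hr μ ν hμ hν hdeg
  have hα : μ ^ 2 + ν ^ 2 = α₀ := by rw [hν2]; ring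
  have hβ : μ ^ 2 * ν ^ 2 = β₀ := by rw [hν2, hprod]
  rw [hα, hβ] at he
  simp only [hα, hβ] at hW
  obtain ⟨δ, hδ, f, hf, hf0, hsol⟩ := rod_ift (rodK r hr) (rodJ r hr) W a b e α₀ β₀ γ₀ he hW
  -- shrink the parameter interval
  have hfw : ContinuousWithinAt f (Icc 0 δ) 0 := hf 0 ⟨le_refl _, hδ.le⟩
  have hA : ∀ᶠ ε in nhdsWithin 0 (Icc 0 δ), 0 < α₀ + a (f ε) := by
    have h : ContinuousWithinAt (fun ε => α₀ + a (f ε)) (Icc 0 δ) 0 :=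
      continuousWithinAt_const.add (a.continuous.continuousAt.comp_continuousWithinAt hfw)
    exact h.eventually (lt_mem_nhds (by simpa [hf0] using hα₀))
  have hB : ∀ᶠ ε in nhdsWithin 0 (Icc 0 δ), 0 < β₀ + b (f ε) := by
    have h : ContinuousWithinAt (fun ε => β₀ + b (f ε)) (Icc 0 δ) 0 :=
      continuousWithinAt_const.add (b.continuous.continuousAt.comp_continuousWithinAt hfw)
    exact h.eventually (lt_mem_nhds (by simpa [hf0] using hβ₀))
  have hX : ∀ᶠ ε in nhdsWithin 0 (Icc 0 δ),
      0 < rodK r hr (rodK r hr (e + W (f ε))) (rodL r hr) := by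
    have hc' : Continuous (fun g => rodK r hr (rodK r hr (e + W g)) (rodL r hr)) := by
      have : Continuous (fun g => rodK r hr (rodK r hr (e + W g))) := by fun_prop
      exact (ContinuousMap.evalCLM ℝ (rodL r hr)).continuous.comp this
    have h := hc'.continuousAt.comp_continuousWithinAt hfw
    exact h.eventually (lt_mem_nhds (by simpa [hf0] using he0))
  obtain ⟨η, hη, hηb⟩ := Metric.mem_nhdsWithin_iff.1 ((hA.and hB).and hX)
  set ρ := min δ (η / 2) with hρ
  have hρ0 : 0 < ρ := lt_min hδ (by linarith)
  have hsub : Icc 0 ρ ⊆ Icc 0 δ := Icc_subset_Icc le_rfl (min_le_left _ _)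
  have hall : ∀ ε ∈ Icc 0 ρ, (0 < α₀ + a (f ε) ∧ 0 < β₀ + b (f ε)) ∧
      0 < rodK r hr (rodK r hr (e + W (f ε))) (rodL r hr) := by
    intro ε hε
    refine hηb ⟨?_, hsub hε⟩
    rw [Metric.mem_ball, Real.dist_eq, sub_zero, abs_of_nonneg hε.1]
    have := hε.2.trans (min_le_right _ _)
    linarith
  set Γ : ℝ → C(Icc (-r) r, ℝ) × (ℝ × ℝ × ℝ) := fun ε =>
    (ε • rodK r hr (rodK r hr (e + W (f ε))), (α₀ + a (f ε), β₀ + b (f ε), γ₀)) with hΓ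
  have hΓ0 : Γ 0 = ((0 : C(Icc (-r) r, ℝ)), (α₀, β₀, γ₀)) := by simp [hΓ, hf0]
  have hΓc : ContinuousOn Γ (Icc 0 ρ) := by
    have hf' := hf.mono hsub
    have h1 : ContinuousOn (fun ε => rodK r hr (rodK r hr (e + W (f ε)))) (Icc 0 ρ) := by
      have : Continuous (fun g => rodK r hr (rodK r hr (e + W g))) := by fun_prop
      exact this.comp_continuousOn hf'
    exact (continuousOn_id.smul h1).prodMk
      ((continuousOn_const.add (a.continuous.comp_continuousOn hf')).prodMk
        ((continuousOn_const.add (b.continuous.comp_continuousOn hf')).prodMk continuousOn_const))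
  have hΓS : ∀ ε ∈ Icc 0 ρ, ε ≠ 0 → Γ ε ∈ S := by
    intro ε hε hε0
    obtain ⟨⟨hA1, hB1⟩, hX1⟩ := hall ε hε
    have hs := hsol ε (hsub hε) _ rfl _ _ rfl rfl
    set u := e + W (f ε) with hu
    obtain ⟨x, hxs, hx⟩ := rod_regular r hr (ε • u)
    rw [hS]
    refine ⟨hA1, hB1, hγ₀, x, hxs, ?_, ⟨-r, (rodL r hr).2, ?_⟩, ?_, ?_, ?_, ?_, ?_⟩
    · intro s
      rw [(hx s).1]
      simp [hΓ, hu]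
    · have h := (hx (rodL r hr)).1
      rw [show ((rodL r hr : Icc (-r) r) : ℝ) = -r from rfl] at h
      rw [h]
      simp only [map_smul, ContinuousMap.smul_apply, smul_eq_mul]
      exact mul_ne_zero hε0 hX1.ne'
    · exact (hx (rodL r hr)).2.1.trans (rodJ_left r hr _)
    · exact (hx (rodL r hr)).2.2.2.1.trans (rodJ_left r hr _)
    · exact (hx (rodR r hr)).1.trans (rodK_right r hr _)
    · exact (hx (rodR r hr)).2.2.1.trans (rodK_right r hr _)
    · intro s hs'
      obtain ⟨g0, g1, g2, g3, g4⟩ := hx ⟨s, hs'⟩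
      simp only [map_smul, ContinuousMap.smul_apply, smul_eq_mul] at g0 g1 g2 g3 g4
      have hpt := congrArg (fun g : C(Icc (-r) r, ℝ) => g ⟨s, hs'⟩) hs
      simp only [ContinuousMap.add_apply, ContinuousMap.sub_apply, ContinuousMap.smul_apply,
        ContinuousMap.mul_apply, ContinuousMap.pow_apply, ContinuousMap.zero_apply,
        smul_eq_mul] at hpt
      rw [g0, g1, g2, g3, g4]
      simp only [hΓ]
      linear_combination ε * hpt
  refine ⟨Γ '' Icc 0 ρ, ?_, ?_, ?_, ?_⟩
  · exact (isConnected_Icc hρ0.le).image Γ hΓc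
  · exact ⟨0, ⟨le_rfl, hρ0.le⟩, hΓ0⟩
  · rintro _ ⟨⟨ε, hε, rfl⟩, hne⟩
    apply hΓS ε hε
    rintro rfl
    exact hne hΓ0
  · intro h
    have h1 : Γ ρ ∈ Γ '' Icc 0 ρ := ⟨ρ, ⟨hρ0.le, le_rfl⟩, rfl⟩
    rw [h, mem_singleton_iff] at h1
    have h2 := congrArg (fun p : C(Icc (-r) r, ℝ) × (ℝ × ℝ × ℝ) => p.1 (rodL r hr)) h1
    have h3 := (hall ρ ⟨hρ0.le, le_rfl⟩).2
    simp only [hΓ, ContinuousMap.smul_apply, smul_eq_mul, ContinuousMap.zero_apply] at h2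
    exact (mul_pos hρ0 h3).ne' h2
end
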